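/- Let g, h : ℝ → ℝ be infinitely differentiable (C^∞), define f(λ) = 1 − √(λ/(2−λ)) · g(2λ − λ²) for λ ∈ (0,2), and set d(λ) = h(2λ − λ²) · f(λ). Then for every integer n ≥ 0: −(1/(2n+1)!) · d^{(2n+1)}(1) + (1/(2n)!) · d^{(2n)}(1) = ((−1)^n / n!) · h^{(n)}(1), where d^{(k)}(1) denotes the k-th derivative of d at λ = 1 and h^{(n)} the n-th derivative of h. -/

import Mathlib

/-!
The substitution `l ↦ 2 - l` fixes `2 * l - l ^ 2`, and `√(l / (2 - l)) = l / √(2 * l - l ^ 2)`.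
So near `1` we have `d l = H l - l * K l` with `H l = h (2 * l - l ^ 2)` and
`K l = h (2 * l - l ^ 2) * g (2 * l - l ^ 2) / √(2 * l - l ^ 2)` both symmetric about `1`, and their
Taylor expansions at `1` have no odd terms. Since `l * K l = K l + (l - 1) * K l`, its
Taylor coefficients of orders `2 * n` and `2 * n + 1` are both the coefficient of order `2 * n` of
`K`, so they cancel in the difference and only the coefficient of order `2 * n` of `H` is left.
As `2 * l - l ^ 2 = 1 - (l - 1) ^ 2`, it is `(-1) ^ n` times the coefficient of order `n` of `h`.
-/

open Filter Topology

theorem factorial_succ_mul_centralBinom_succ (n : ℕ) :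
    (n + 1).factorial * (n + 1).centralBinom =
      2 * (2 * n + 1) * (n.factorial * n.centralBinom) := by
  rw [Nat.factorial_succ]
  linear_combination n.factorial * n.succ_mul_centralBinom_succ

theorem factorial_two_mul (n : ℕ) :
    (2 * n).factorial = n.factorial * n.factorial * n.centralBinom := by
  have h_choose := Nat.add_choose_mul_factorial_mul_factorial n n
  rw [← two_mul, ← Nat.centralBinom_eq_two_mul_choose] at h_choose
  rw [← h_choose]
  ring

section VectorValued

variable {𝕜 F : Type*} [NontriviallyNormedField 𝕜] [NormedAddCommGroup F] [NormedSpace 𝕜 F]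

theorem iteratedDeriv_eq_zero_of_odd_of_reflection [CharZero 𝕜] {f : 𝕜 → F} {c : 𝕜} {k : ℕ}
    (hf : ∀ x, f (2 * c - x) = f x) (hk : Odd k) : iteratedDeriv k f c = 0 := by
  have h_neg : iteratedDeriv k f c = -iteratedDeriv k f c := by
    have h_reflect := congrFun (iteratedDeriv_comp_const_sub k f (2 * c)) c
    simp only [hf] at h_reflect
    simpa [hk.neg_one_pow, two_mul] using h_reflect
  have h_two : (2 : 𝕜) • iteratedDeriv k f c = 0 := by
    rw [two_smul, ← eq_neg_iff_add_eq_zero]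
    exact h_neg
  exact (smul_eq_zero.mp h_two).resolve_left two_ne_zero

theorem deriv_sub_const_smul {f : 𝕜 → F} {x : 𝕜} (c : 𝕜) (hf : DifferentiableAt 𝕜 f x) :
    deriv (fun t ↦ (t - c) • f t) x = f x + (x - c) • deriv f x := by
  rw [deriv_fun_smul (by fun_prop) hf, deriv_sub_const, deriv_id'', one_smul, add_comm]

theorem eventually_differentiableAt_of_contDiffAt {E : Type*} [NormedAddCommGroup E]
    [NormedSpace 𝕜 E] {f : E → F} {x : E} {k : ℕ} (hf : ContDiffAt 𝕜 (k + 1 : ℕ) f x) :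
    ∀ᶠ t in 𝓝 x, DifferentiableAt 𝕜 f t := by
  filter_upwards [hf.eventually (by simp)] with t ht
  exact ht.differentiableAt (by simp)

theorem iteratedDeriv_sub_const_smul {k : ℕ} {f : 𝕜 → F} {x : 𝕜} (c : 𝕜)
    (hf : ContDiffAt 𝕜 k f x) :
    iteratedDeriv k (fun t ↦ (t - c) • f t) x =
      (x - c) • iteratedDeriv k f x + (k : 𝕜) • iteratedDeriv (k - 1) f x := by
  induction k generalizing f with
  | zero => simp
  | succ k ih =>
    have hf' : ContDiffAt 𝕜 k (deriv f) x := hf.derivWithin (by simp)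
    have hf_k : ContDiffAt 𝕜 k f x := hf.of_le (by simp)
    have h_sub : ContDiffAt 𝕜 k (fun t ↦ t - c) x := by fun_prop
    have h_deriv : deriv (fun t ↦ (t - c) • f t) =ᶠ[𝓝 x] fun t ↦ f t + (t - c) • deriv f t :=
      (eventually_differentiableAt_of_contDiffAt hf).mono fun t ↦ deriv_sub_const_smul c
    have h_pred : (k : 𝕜) • iteratedDeriv (k - 1) (deriv f) x = (k : 𝕜) • iteratedDeriv k f x := by
      cases k <;> simp [iteratedDeriv_succ']
    rw [iteratedDeriv_succ', h_deriv.iteratedDeriv_eq,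
      iteratedDeriv_fun_add hf_k (h_sub.fun_smul hf'), ih hf', h_pred,
      iteratedDeriv_succ', Nat.add_sub_cancel]
    push_cast
    module

theorem deriv_comp_quadratic {f : 𝕜 → F} (a b c : 𝕜) {t : 𝕜}
    (hf : DifferentiableAt 𝕜 f (a + b * (t - c) ^ 2)) :
    deriv (fun s ↦ f (a + b * (s - c) ^ 2)) t =
      (t - c) • (2 * b) • deriv f (a + b * (t - c) ^ 2) := by
  have h_quadratic : HasDerivAt (fun s ↦ a + b * (s - c) ^ 2) ((t - c) * (2 * b)) t := by
    refine ((((hasDerivAt_id' t).sub_const c).fun_pow 2).const_mul b |>.const_add a).congr_deriv ?_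
    push_cast
    ring
  rw [smul_smul]
  exact (hf.hasDerivAt.scomp t h_quadratic).deriv

theorem iteratedDeriv_two_mul_comp_quadratic {n : ℕ} {f : 𝕜 → F} {a : 𝕜} (b c : 𝕜)
    (hf : ContDiffAt 𝕜 (2 * n : ℕ) f a) :
    iteratedDeriv (2 * n) (fun t ↦ f (a + b * (t - c) ^ 2)) c =
      (n.factorial * n.centralBinom * b ^ n : 𝕜) • iteratedDeriv n f a := by
  induction n generalizing f with
  | zero => simp
  | succ n ih =>
    have hf' : ContDiffAt 𝕜 (2 * n + 1 : ℕ) (deriv f) a := hf.derivWithin (by norm_cast)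
    have h_tendsto : Tendsto (fun t ↦ a + b * (t - c) ^ 2) (𝓝 c) (𝓝 a) :=
      Continuous.tendsto' (by fun_prop) _ _ (by simp)
    have h_deriv : deriv (fun t ↦ f (a + b * (t - c) ^ 2)) =ᶠ[𝓝 c]
        fun t ↦ (t - c) • (2 * b) • deriv f (a + b * (t - c) ^ 2) :=
      (h_tendsto.eventually (eventually_differentiableAt_of_contDiffAt hf)).mono
        fun t ↦ deriv_comp_quadratic a b c
    have h_comp : ContDiffAt 𝕜 (2 * n + 1 : ℕ) (fun t ↦ deriv f (a + b * (t - c) ^ 2)) c :=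
      ContDiffAt.comp (f := fun t ↦ a + b * (t - c) ^ 2) c (by simpa using hf') (by fun_prop)
    have h_coeff : ((n + 1).factorial * (n + 1).centralBinom : 𝕜) =
        2 * (2 * n + 1) * (n.factorial * n.centralBinom) :=
      mod_cast congrArg (Nat.cast (R := 𝕜)) (factorial_succ_mul_centralBinom_succ n)
    rw [show 2 * (n + 1) = 2 * n + 1 + 1 by ring, iteratedDeriv_succ', h_deriv.iteratedDeriv_eq,
      iteratedDeriv_sub_const_smul c (contDiffAt_const.fun_smul h_comp), sub_self, zero_smul,
      zero_add, Nat.add_sub_cancel, iteratedDeriv_fun_const_smul_field, ih (hf'.of_le (by simp)),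
      ← iteratedDeriv_succ', smul_smul, smul_smul, h_coeff]
    congr 1
    push_cast
    ring

theorem smul_iteratedDeriv_two_mul_add_one_id_smul_of_reflection [CharZero 𝕜] {n : ℕ} {f : 𝕜 → F}
    {c : 𝕜} (hf : ContDiffAt 𝕜 (2 * n + 1 : ℕ) f c) (h_symm : ∀ x, f (2 * c - x) = f x) :
    c • iteratedDeriv (2 * n + 1) (fun t ↦ t • f t) c =
      (2 * n + 1 : 𝕜) • iteratedDeriv (2 * n) (fun t ↦ t • f t) c := by
  have h_odd : iteratedDeriv (2 * n + 1) (fun t ↦ t • f t) c =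
      (2 * n + 1 : 𝕜) • iteratedDeriv (2 * n) f c := by
    simpa [iteratedDeriv_eq_zero_of_odd_of_reflection h_symm (odd_two_mul_add_one n)] using
      iteratedDeriv_sub_const_smul 0 hf
  have h_pred : ((2 * n : ℕ) : 𝕜) • iteratedDeriv (2 * n - 1) f c = 0 := by
    rcases n.eq_zero_or_pos with rfl | hn
    · simp
    · have : Odd (2 * n - 1) := ⟨n - 1, by lia⟩
      rw [iteratedDeriv_eq_zero_of_odd_of_reflection h_symm this, smul_zero]
  have h_even : iteratedDeriv (2 * n) (fun t ↦ t • f t) c = c • iteratedDeriv (2 * n) f c := by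
    simpa only [sub_zero, h_pred, add_zero] using
      iteratedDeriv_sub_const_smul (k := 2 * n) 0 (hf.of_le (by simp))
  rw [h_odd, h_even, smul_comm]

end VectorValued

theorem sqrt_div_sub_eq_div_sqrt (a : ℝ) {x : ℝ} (hx : 0 ≤ x) :
    √(x / (a - x)) = x / √(x * (a - x)) := by
  rcases hx.eq_or_lt with rfl | hx_pos
  · simp
  · rw [← mul_div_mul_left x (a - x) hx_pos.ne', Real.sqrt_div (mul_self_nonneg x),
      Real.sqrt_mul_self hx]

theorem mul_one_sub_sqrt_mul_eventuallyEq (G H : ℝ → ℝ) :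
    (fun l ↦ H l * (1 - √(l / (2 - l)) * G l)) =ᶠ[𝓝 1]
      fun l ↦ H l - l * (H l * G l / √(2 * l - l ^ 2)) := by
  filter_upwards [eventually_ge_nhds (zero_lt_one' ℝ)] with l hl
  rw [sqrt_div_sub_eq_div_sqrt 2 hl, show l * (2 - l) = 2 * l - l ^ 2 by ring]
  ring

theorem iteratedDeriv_mul_one_sub_sqrt_mul_of_reflection {G H : ℝ → ℝ} {n : ℕ}
    (hG : ContDiffAt ℝ (2 * n + 1 : ℕ) G 1) (hH : ContDiffAt ℝ (2 * n + 1 : ℕ) H 1)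
    (hG_symm : ∀ l, G (2 - l) = G l) (hH_symm : ∀ l, H (2 - l) = H l) :
    -(1 / ((2 * n + 1).factorial : ℝ)) *
          iteratedDeriv (2 * n + 1) (fun l ↦ H l * (1 - √(l / (2 - l)) * G l)) 1 +
        (1 / ((2 * n).factorial : ℝ)) *
          iteratedDeriv (2 * n) (fun l ↦ H l * (1 - √(l / (2 - l)) * G l)) 1 =
      iteratedDeriv (2 * n) H 1 / (2 * n).factorial := by
  set K : ℝ → ℝ := fun l ↦ H l * G l / √(2 * l - l ^ 2) with hK_def
  have hK : ContDiffAt ℝ (2 * n + 1 : ℕ) K 1 :=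
    (hH.mul hG).div (ContDiffAt.sqrt (by fun_prop) (by norm_num)) (by norm_num)
  have hK_symm (l : ℝ) : K (2 - l) = K l := by
    simp only [hK_def, hG_symm, hH_symm]
    ring_nf
  have hH_odd : iteratedDeriv (2 * n + 1) H 1 = 0 :=
    iteratedDeriv_eq_zero_of_odd_of_reflection (by simpa using hH_symm) (odd_two_mul_add_one n)
  have hK_orders : iteratedDeriv (2 * n + 1) (fun l ↦ l * K l) 1 =
      (2 * n + 1) * iteratedDeriv (2 * n) (fun l ↦ l * K l) 1 := by
    simpa using
      smul_iteratedDeriv_two_mul_add_one_id_smul_of_reflection hK (by simpa using hK_symm)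
  have h_split {k : ℕ} (hk : k ≤ 2 * n + 1) :
      iteratedDeriv k (fun l ↦ H l * (1 - √(l / (2 - l)) * G l)) 1 =
        iteratedDeriv k H 1 - iteratedDeriv k (fun l ↦ l * K l) 1 := by
    rw [(mul_one_sub_sqrt_mul_eventuallyEq G H).iteratedDeriv_eq k]
    exact iteratedDeriv_fun_sub (hH.of_le (mod_cast hk))
      ((contDiffAt_id.mul hK).of_le (mod_cast hk))
  rw [h_split (Nat.le_succ _), h_split le_rfl, hH_odd, hK_orders, Nat.factorial_succ]
  push_cast
  field_simp
  ring

theorem iteratedDeriv_two_mul_comp_two_mul_sub_sq {f : ℝ → ℝ} {n : ℕ}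
    (hf : ContDiffAt ℝ (2 * n : ℕ) f 1) :
    iteratedDeriv (2 * n) (fun l ↦ f (2 * l - l ^ 2)) 1 / (2 * n).factorial =
      (-1) ^ n / n.factorial * iteratedDeriv n f 1 := by
  have h_square : (fun l ↦ f (2 * l - l ^ 2)) = fun l ↦ f (1 + -1 * (l - 1) ^ 2) := by
    ext l
    ring_nf
  have h_ne_zero := n.centralBinom_ne_zero
  rw [h_square, iteratedDeriv_two_mul_comp_quadratic (-1) 1 hf, smul_eq_mul, factorial_two_mul]
  push_cast
  field_simp

theorem stmt_7_general {g h : ℝ → ℝ} {n : ℕ} (hg : ContDiffAt ℝ (2 * n + 1 : ℕ) g 1)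
    (hh : ContDiffAt ℝ (2 * n + 1 : ℕ) h 1) :
    -(1 / ((2 * n + 1).factorial : ℝ)) *
        iteratedDeriv (2 * n + 1)
          (fun l : ℝ =>
            h (2 * l - l ^ 2) *
              (1 - Real.sqrt (l / (2 - l)) * g (2 * l - l ^ 2))) 1
      + (1 / ((2 * n).factorial : ℝ)) *
        iteratedDeriv (2 * n)
          (fun l : ℝ =>
            h (2 * l - l ^ 2) *
              (1 - Real.sqrt (l / (2 - l)) * g (2 * l - l ^ 2))) 1
      = ((-1) ^ n / (n.factorial : ℝ)) * iteratedDeriv n h 1 := by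
  have h_comp {f : ℝ → ℝ} (hf : ContDiffAt ℝ (2 * n + 1 : ℕ) f 1) :
      ContDiffAt ℝ (2 * n + 1 : ℕ) (fun l ↦ f (2 * l - l ^ 2)) 1 :=
    ContDiffAt.comp (f := fun l ↦ 2 * l - l ^ 2) 1 (by convert hf; norm_num) (by fun_prop)
  have h_symm (f : ℝ → ℝ) (l : ℝ) : f (2 * (2 - l) - (2 - l) ^ 2) = f (2 * l - l ^ 2) := by
    ring_nf
  rw [← iteratedDeriv_two_mul_comp_two_mul_sub_sq (hh.of_le (by simp))]
  exact iteratedDeriv_mul_one_sub_sqrt_mul_of_reflection (h_comp hg) (h_comp hh) (h_symm g)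
    (h_symm h)

/-- Lemma 4: for d(λ) = h(2λ-λ²)·(1 - √(λ/(2-λ))·g(2λ-λ²)),
-d^{(2n+1)}(1)/(2n+1)! + d^{(2n)}(1)/(2n)! = (-1)^n h^{(n)}(1)/n!. -/
theorem stmt_7 (g h : ℝ → ℝ) (hg : ContDiff ℝ (⊤ : ℕ∞) g) (hh : ContDiff ℝ (⊤ : ℕ∞) h) (n : ℕ) :
    -(1 / ((2 * n + 1).factorial : ℝ)) *
        iteratedDeriv (2 * n + 1)
          (fun l : ℝ =>
            h (2 * l - l ^ 2) *
              (1 - Real.sqrt (l / (2 - l)) * g (2 * l - l ^ 2))) 1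
      + (1 / ((2 * n).factorial : ℝ)) *
        iteratedDeriv (2 * n)
          (fun l : ℝ =>
            h (2 * l - l ^ 2) *
              (1 - Real.sqrt (l / (2 - l)) * g (2 * l - l ^ 2))) 1
      = ((-1) ^ n / (n.factorial : ℝ)) * iteratedDeriv n h 1 :=
  stmt_7_general (contDiff_infty.mp hg _).contDiffAt (contDiff_infty.mp hh _).contDiffAt
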